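/- For every unital additive semigroup Γ ⊆ ℝ (i.e., 0 ∈ Γ and Γ + Γ ⊆ Γ), the Banach space AP_Γ(ℝ) of almost periodic functions on ℝ with spectrum contained in Γ has the approximation property. -/

import Mathlib

open Complex Filter Topology Set Metric
open scoped BoundedContinuousFunction

noncomputable section

namespace SAP

variable {B : Type*} [NormedAddCommGroup B] [NormedSpace ℂ B]

/-- translate of a bounded continuous function on `ℝ` -/
def translateR (f : ℝ →ᵇ B) (τ : ℝ) : ℝ →ᵇ B :=
  f.compContinuous ⟨fun x => x + τ, by continuity⟩

/-- Bohr almost periodic functions -/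
def IsAP (f : ℝ →ᵇ B) : Prop := IsCompact (closure (Set.range (translateR f)))

/-- mean value of a function on `ℝ` -/
def meanValueR (g : ℝ → B) : B :=
  haveI : Nonempty B := ⟨0⟩
  limUnder atTop (fun T : ℝ => (2 * T)⁻¹ • ∫ x in (-T)..T, g x)

/-- Bohr-Fourier coefficient -/
def bohrCoeffR (g : ℝ → B) (lam : ℝ) : B :=
  meanValueR (fun x => Complex.exp (-(Complex.I * lam * x)) • g x)

/-- spectrum of an almost periodic function -/
def apSpec (g : ℝ → B) : Set ℝ := {lam | bohrCoeffR g lam ≠ 0}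

/-- the set `AP_Γ(ℝ)` of almost periodic functions with spectrum in `Γ` -/
def APset (Γ : Set ℝ) : Set (ℝ →ᵇ ℂ) := {f | IsAP f ∧ apSpec ⇑f ⊆ Γ}

/-- unital additive semi-group in ℝ -/
def IsUnitalSemigroup (Γ : Set ℝ) : Prop :=
  (0 : ℝ) ∈ Γ ∧ ∀ a ∈ Γ, ∀ b ∈ Γ, a + b ∈ Γ

/-- the approximation property of a complex normed space -/
def HasApproxProperty (X : Type*) [NormedAddCommGroup X] [NormedSpace ℂ X] : Prop :=
  ∀ K : Set X, IsCompact K → ∀ ε : ℝ, 0 < ε →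
    ∃ T : X →L[ℂ] X, FiniteDimensional ℂ (LinearMap.range (T : X →ₗ[ℂ] X)) ∧
      ∀ x ∈ K, ‖T x - x‖ < ε

end SAP

/-!
Cover the totally bounded set of translates of an almost periodic function `f` by finitely many
small balls. Over a fine lattice this is a colouring of `ℤ`, and Bogolyubov's lemma shows that `f`
is moved only little by all `y` in some Bohr set. A nonnegative trigonometric polynomial peaking on
that Bohr set has normalized powers `K` whose mass concentrates there, because almost periodicity
bounds the means of the powers from below. Hence the convolutions `f ↦ f * K` are contractions that
approximate the identity on each compact set of almost periodic functions. They have finite rank and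
multiply the Bohr–Fourier coefficients by scalars, so they do not enlarge the spectrum.
-/

namespace SAP

section Bogolyubov

open scoped Pointwise Finset

variable {G : Type*} [AddCommGroup G] {A : Finset G}

/-- The exponential sum of a character over a finite set, i.e. the Fourier transform of the
indicator of the set. -/
def expSum (A : Finset G) (ψ : AddChar G ℂ) : ℂ := ∑ a ∈ A, ψ a

theorem sq_norm_expSum [Finite G] (A : Finset G) (ψ : AddChar G ℂ) :
    (‖expSum A ψ‖ : ℂ) ^ 2 = ∑ a ∈ A, ∑ b ∈ A, ψ (a - b) := by
  rw [← Complex.mul_conj', expSum, map_sum, Finset.sum_mul_sum]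
  simp only [sub_eq_add_neg, AddChar.map_add_eq_mul, AddChar.map_neg_eq_conj]

theorem sum_sq_norm_expSum [Fintype G] (A : Finset G) :
    ∑ ψ, ‖expSum A ψ‖ ^ 2 = Fintype.card G * #A := by
  classical
  suffices ∑ ψ, (‖expSum A ψ‖ : ℂ) ^ 2 = Fintype.card G * #A by exact_mod_cast this
  calc ∑ ψ, (‖expSum A ψ‖ : ℂ) ^ 2 = ∑ a ∈ A, ∑ b ∈ A, ∑ ψ : AddChar G ℂ, ψ (a - b) := by
        simp only [sq_norm_expSum, Finset.sum_comm (s := Finset.univ)]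
    _ = Fintype.card G * #A := by
        simp [AddChar.sum_apply_eq_ite, sub_eq_zero, mul_comm]

theorem sum_pow_four_norm_expSum_mul_re [Finite G] [DecidableEq G] {x : G}
    (hx : x ∉ A + A - A - A) :
    ∑ ψ : AddChar G ℂ, ‖expSum A ψ‖ ^ 4 * (ψ x).re = 0 := by
  have := Fintype.ofFinite G
  have hne : ∀ a ∈ A, ∀ b ∈ A, ∀ c ∈ A, ∀ d ∈ A, b - d + (a - c) - x ≠ 0 := by
    rintro a ha b hb c hc d hd h
    have hx' : a + b - c - d = x := by rw [← sub_eq_zero, ← h]; abel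
    exact hx <| hx' ▸ Finset.sub_mem_sub
      (Finset.sub_mem_sub (Finset.add_mem_add ha hb) hc) hd
  have hsum : ∑ ψ : AddChar G ℂ, (‖expSum A ψ‖ : ℂ) ^ 4 * ψ (-x) = 0 := by
    calc ∑ ψ : AddChar G ℂ, (‖expSum A ψ‖ : ℂ) ^ 4 * ψ (-x)
        = ∑ ψ : AddChar G ℂ, ∑ a ∈ A, ∑ c ∈ A, ∑ b ∈ A, ∑ d ∈ A, ψ (b - d + (a - c) - x) := by
          refine Finset.sum_congr rfl fun ψ _ ↦ ?_
          rw [show 4 = 2 * 2 by rfl, pow_mul, sq_norm_expSum, sq]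
          simp only [Finset.sum_mul, Finset.mul_sum, ← AddChar.map_add_eq_mul, ← sub_eq_add_neg]
      _ = ∑ a ∈ A, ∑ c ∈ A, ∑ b ∈ A, ∑ d ∈ A, ∑ ψ : AddChar G ℂ, ψ (b - d + (a - c) - x) := by
          simp only [Finset.sum_comm (s := Finset.univ)]
      _ = 0 := by
        refine Finset.sum_eq_zero fun a ha ↦ Finset.sum_eq_zero fun c hc ↦
          Finset.sum_eq_zero fun b hb ↦ Finset.sum_eq_zero fun d hd ↦ ?_
        rw [AddChar.sum_apply_eq_ite, if_neg (hne a ha b hb c hc d hd)]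
  simpa [AddChar.map_neg_eq_conj, ← Complex.ofReal_pow] using congrArg Complex.re hsum

/-- The characters `ψ` with `‖expSum A ψ‖ ^ 2 ≥ #A ^ 3 / (2 * card G)`: those that carry the bulk
of the fourth moment of `expSum A`. -/
def largeSpectrum [Fintype G] (A : Finset G) : Finset (AddChar G ℂ) :=
  {ψ | (#A : ℝ) ^ 3 ≤ 2 * Fintype.card G * ‖expSum A ψ‖ ^ 2}

theorem card_largeSpectrum_mul_sq_le [Fintype G] (hA : A.Nonempty) :
    #(largeSpectrum A) * #A ^ 2 ≤ 2 * Fintype.card G ^ 2 := by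
  have hA' : (0 : ℝ) < #A := by exact_mod_cast hA.card_pos
  have h : (#(largeSpectrum A) : ℝ) * #A ^ 3 ≤ 2 * Fintype.card G * (Fintype.card G * #A) := by
    calc (#(largeSpectrum A) : ℝ) * #A ^ 3
        ≤ ∑ ψ ∈ largeSpectrum A, 2 * Fintype.card G * ‖expSum A ψ‖ ^ 2 := by
          rw [← nsmul_eq_mul]
          exact Finset.card_nsmul_le_sum _ _ _ fun ψ hψ ↦ (Finset.mem_filter.1 hψ).2
      _ ≤ ∑ ψ, 2 * Fintype.card G * ‖expSum A ψ‖ ^ 2 :=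
          Finset.sum_le_univ_sum_of_nonneg fun ψ ↦ by positivity
      _ = 2 * Fintype.card G * (Fintype.card G * #A) := by
          rw [← Finset.mul_sum, sum_sq_norm_expSum]
  have : (#(largeSpectrum A) : ℝ) * #A ^ 2 ≤ 2 * Fintype.card G ^ 2 :=
    le_of_mul_le_mul_right (by linarith) hA'
  exact_mod_cast this

-- Bogolyubov's lemma: otherwise the fourth moment of `expSum A` twisted by `x` would vanish, but
-- the trivial character contributes `#A ^ 4` to it and the characters outside the large spectrum
-- take away at most half of that.
theorem mem_add_sub_sub_of_re_nonneg [Fintype G] [DecidableEq G] (hA : A.Nonempty) {x : G}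
    (hx : ∀ ψ ∈ largeSpectrum A, 0 ≤ (ψ x).re) : x ∈ A + A - A - A := by
  by_contra hmem
  have hA' : (0 : ℝ) < #A := by exact_mod_cast hA.card_pos
  set c : ℝ := #A ^ 3 / (2 * Fintype.card G) with hc
  have hterm : ∀ ψ : AddChar G ℂ,
      -(c * ‖expSum A ψ‖ ^ 2) ≤ ‖expSum A ψ‖ ^ 4 * (ψ x).re := by
    intro ψ
    by_cases hψ : ψ ∈ largeSpectrum A
    · have := mul_nonneg (pow_nonneg (norm_nonneg (expSum A ψ)) 4) (hx ψ hψ)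
      have : 0 ≤ c * ‖expSum A ψ‖ ^ 2 := by positivity
      linarith
    · have hlt : ‖expSum A ψ‖ ^ 2 ≤ c := by
        rw [hc, le_div_iff₀ (by positivity), mul_comm]
        exact (lt_of_not_ge fun h ↦ hψ (by simpa [largeSpectrum] using h)).le
      have hre : -1 ≤ (ψ x).re := by
        simpa using (abs_le.1 (Complex.abs_re_le_norm (ψ x))).1
      calc -(c * ‖expSum A ψ‖ ^ 2) ≤ -(‖expSum A ψ‖ ^ 2 * ‖expSum A ψ‖ ^ 2) := by gcongr
        _ = ‖expSum A ψ‖ ^ 4 * (-1) := by ring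
        _ ≤ ‖expSum A ψ‖ ^ 4 * (ψ x).re := by gcongr
  have hone : ‖expSum A (1 : AddChar G ℂ)‖ = #A := by simp [expSum]
  have hsum : (#A : ℝ) ^ 4 + ∑ ψ, -(c * ‖expSum A ψ‖ ^ 2) ≤ 0 := by
    rw [← sum_pow_four_norm_expSum_mul_re hmem, ← Finset.add_sum_erase _ _ (Finset.mem_univ 1),
      ← Finset.add_sum_erase _ (fun ψ ↦ ‖expSum A ψ‖ ^ 4 * (ψ x).re) (Finset.mem_univ 1), hone]
    have hnn : 0 ≤ c * (#A : ℝ) ^ 2 := by positivity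
    have := Finset.sum_le_sum fun ψ (_ : ψ ∈ Finset.univ.erase 1) ↦ hterm ψ
    simp only [AddChar.one_apply, one_re, mul_one]
    linarith
  rw [Finset.sum_neg_distrib, ← Finset.mul_sum, sum_sq_norm_expSum] at hsum
  have hc' : c * (Fintype.card G * #A) = #A ^ 4 / 2 := by rw [hc]; field_simp
  linarith [pow_pos hA' 4]

end Bogolyubov

section Integers

open scoped Pointwise Finset

theorem eq_of_intCast_zmod_eq {M : ℕ} {a b : ℤ} (h : (a : ZMod M) = b) (hab : |a - b| < M) :
    a = b := by
  refine sub_eq_zero.1 (Int.eq_zero_of_abs_lt_dvd ?_ hab)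
  rw [← ZMod.intCast_zmod_eq_zero_iff_dvd, Int.cast_sub, h, sub_self]

theorem mem_add_sub_sub_of_intCast_mem {D : Finset ℤ} {N : ℕ} (hDN : D ⊆ Finset.Ico 0 (N : ℤ))
    {x : ℤ} (hx : |x| < N) {C : Finset (ZMod (4 * N))} (hC : C = D.image Int.cast)
    (hxC : (x : ZMod (4 * N)) ∈ C + C - C - C) : x ∈ D + D - D - D := by
  have hbounds : ∀ d ∈ D, 0 ≤ d ∧ d < N := fun d hd ↦ Finset.mem_Ico.1 (hDN hd)
  simp only [hC, Finset.mem_sub, Finset.mem_add, Finset.exists_mem_image] at hxC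
  obtain ⟨_, ⟨_, ⟨p, hp, q, hq, rfl⟩, r, hr, rfl⟩, s, hs, hx'⟩ := hxC
  have hpqrs : p + q - r - s = x := by
    refine eq_of_intCast_zmod_eq (by exact_mod_cast hx') ?_
    have := hbounds p hp
    have := hbounds q hq
    have := hbounds r hr
    have := hbounds s hs
    grind
  exact hpqrs ▸ Finset.sub_mem_sub
    (Finset.sub_mem_sub (Finset.add_mem_add hp hq) hr) hs

-- Modulo `4 * N` the elements of `D + D - D - D` do not wrap around, so Bogolyubov's lemma in
-- `ZMod (4 * N)` transfers back to `ℤ`.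
theorem exists_circle_finset_mem_add_sub_sub {D : Finset ℤ} {N m : ℕ} (hD : D.Nonempty)
    (hDN : D ⊆ Finset.Ico 0 (N : ℤ)) (hm : N ≤ m * #D) :
    ∃ Z : Finset Circle, #Z ≤ 32 * m ^ 2 ∧
      ∀ x : ℤ, |x| < N → (∀ z ∈ Z, 0 ≤ ((z ^ x : Circle) : ℂ).re) → x ∈ D + D - D - D := by
  classical
  have hbounds : ∀ d ∈ D, 0 ≤ d ∧ d < N := fun d hd ↦ Finset.mem_Ico.1 (hDN hd)
  have hN : 0 < N := by
    obtain ⟨d, hd⟩ := hD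
    have := hbounds d hd
    omega
  have : NeZero (4 * N) := ⟨by omega⟩
  let C : Finset (ZMod (4 * N)) := D.image Int.cast
  have hC : #C = #D := Finset.card_image_of_injOn fun a ha b hb hab ↦
    eq_of_intCast_zmod_eq hab (by have := hbounds a ha; have := hbounds b hb; grind)
  let eval (ψ : AddChar (ZMod (4 * N)) ℂ) : Circle := AddChar.circleEquivComplex.symm ψ 1
  have heval (ψ : AddChar (ZMod (4 * N)) ℂ) (x : ℤ) : ((eval ψ ^ x : Circle) : ℂ) = ψ x := by
    rw [← AddChar.map_zsmul_eq_zpow, zsmul_one]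
    exact congrArg (fun χ : AddChar (ZMod (4 * N)) ℂ ↦ χ x)
      (AddChar.circleEquivComplex.apply_symm_apply ψ)
  refine ⟨(largeSpectrum C).image eval, Finset.card_image_le.trans ?_, fun x hx hre ↦ ?_⟩
  · have hcard := card_largeSpectrum_mul_sq_le (hD.image (Int.cast : ℤ → ZMod (4 * N)))
    rw [ZMod.card, hC] at hcard
    refine Nat.le_of_mul_le_mul_right ?_ (pow_pos hD.card_pos 2)
    calc #(largeSpectrum C) * #D ^ 2 ≤ 2 * (4 * N) ^ 2 := hcard
      _ ≤ 2 * (4 * (m * #D)) ^ 2 := by gcongr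
      _ = 32 * m ^ 2 * #D ^ 2 := by ring
  · have hxC : (x : ZMod (4 * N)) ∈ C + C - C - C :=
      mem_add_sub_sub_of_re_nonneg (hD.image _) fun ψ hψ ↦
        heval ψ x ▸ hre _ (Finset.mem_image_of_mem _ hψ)
    exact mem_add_sub_sub_of_intCast_mem hDN hx rfl hxC

-- The bound on the cardinalities keeps the sets `Z` in a fixed compact power of the circle, where
-- they have a limit point as `N → ∞`.
theorem exists_circle_finset_of_forall_abs_lt {S : Set ℤ} {k : ℕ}
    (h : ∀ N : ℕ, ∃ Z : Finset Circle, #Z ≤ k ∧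
      ∀ x : ℤ, |x| < N → (∀ z ∈ Z, 0 ≤ ((z ^ x : Circle) : ℂ).re) → x ∈ S) :
    ∃ Z : Finset Circle, ∀ x : ℤ, (∀ z ∈ Z, 0 < ((z ^ x : Circle) : ℂ).re) → x ∈ S := by
  classical
  have hpad (N : ℕ) : ∃ w : Fin k → Circle,
      ∀ x : ℤ, |x| < N → (∀ i, 0 ≤ ((w i ^ x : Circle) : ℂ).re) → x ∈ S := by
    obtain ⟨Z, hZ, hS⟩ := h N
    refine ⟨fun i ↦ Z.toList.getD i 1, fun x hx hre ↦ hS x hx fun z hz ↦ ?_⟩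
    obtain ⟨i, hi, rfl⟩ := List.mem_iff_getElem.1 (Finset.mem_toList.2 hz)
    rw [← List.getD_eq_getElem _ 1 hi]
    exact hre ⟨i, by rw [Finset.length_toList] at hi; omega⟩
  choose w hw using hpad
  obtain ⟨z, φ, hφ, hlim⟩ := CompactSpace.tendsto_subseq w
  refine ⟨Finset.univ.image z, fun x hx ↦ ?_⟩
  have hpos : ∀ᶠ n in atTop, ∀ i, 0 < ((w (φ n) i ^ x : Circle) : ℂ).re := by
    refine eventually_all.2 fun i ↦ ?_
    have hcont : Continuous fun v : Fin k → Circle ↦ ((v i ^ x : Circle) : ℂ).re :=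
      continuous_re.comp (continuous_subtype_val.comp ((continuous_apply i).zpow x))
    exact (hcont.tendsto z).comp hlim |>.eventually_const_lt
      (hx _ (Finset.mem_image_of_mem z (Finset.mem_univ i)))
  have hlarge : ∀ᶠ n in atTop, |x| < φ n :=
    (tendsto_natCast_atTop_atTop.comp hφ.tendsto_atTop).eventually_gt_atTop |x|
  obtain ⟨n, hn, hxn⟩ := (hpos.and hlarge).exists
  exact hw (φ n) x hxn fun i ↦ (hn i).le

-- For each `N` some colour class has density at least `1 / card κ` in `[0, N]`.
theorem exists_circle_finset_of_coloring {κ : Type*} [Finite κ] (c : ℤ → κ) :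
    ∃ Z : Finset Circle, ∀ x : ℤ, (∀ z ∈ Z, 0 < ((z ^ x : Circle) : ℂ).re) →
      ∃ p q r s, c p = c r ∧ c q = c s ∧ p + q - r - s = x := by
  classical
  have := Fintype.ofFinite κ
  refine exists_circle_finset_of_forall_abs_lt (k := 32 * (Fintype.card κ) ^ 2) fun N ↦ ?_
  have : Nonempty κ := ⟨c 0⟩
  obtain ⟨i, -, hi⟩ := Finset.exists_max_image Finset.univ
    (fun i ↦ #{n ∈ Finset.Ico 0 ((N : ℤ) + 1) | c n = i}) Finset.univ_nonempty
  let D : Finset ℤ := {n ∈ Finset.Ico 0 ((N : ℤ) + 1) | c n = i}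
  have hcard : N + 1 ≤ Fintype.card κ * #D := by
    have := Finset.card_le_mul_card_image_of_maps_to (fun n _ ↦ Finset.mem_univ (c n)) _ hi
    rwa [mul_comm, Int.card_Ico, sub_zero, Int.toNat_natCast_add_one] at this
  have hD : D.Nonempty := Finset.card_pos.1
    (pos_of_mul_pos_right (N.succ_pos.trans_le hcard) (Nat.zero_le _))
  obtain ⟨Z, hZ, hmem⟩ := exists_circle_finset_mem_add_sub_sub hD
    (N := N + 1) (by exact_mod_cast Finset.filter_subset _ _) hcard
  refine ⟨Z, hZ, fun x hx hre ↦ ?_⟩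
  have hx' := hmem x (by push_cast; omega) hre
  simp only [Finset.mem_sub, Finset.mem_add] at hx'
  obtain ⟨_, ⟨_, ⟨p, hp, q, hq, rfl⟩, r, hr, rfl⟩, s, hs, rfl⟩ := hx'
  have hc : ∀ n ∈ D, c n = i := fun n hn ↦ (Finset.mem_filter.1 hn).2
  exact ⟨p, q, r, s, by rw [hc p hp, hc r hr], by rw [hc q hq, hc s hs], rfl⟩

end Integers

section BohrSets

/-- The character `x ↦ exp (i l x)` of `ℝ` of frequency `l`, as a bounded continuous function. -/
def expChar (l : ℝ) : ℝ →ᵇ ℂ := BoundedContinuousFunction.innerProbChar l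

theorem expChar_apply (l x : ℝ) : expChar l x = Circle.exp (l * x) := by
  simp [expChar, BoundedContinuousFunction.innerProbChar_apply, mul_comm]

theorem norm_expChar_apply (l x : ℝ) : ‖expChar l x‖ = 1 := by
  rw [expChar_apply, Circle.norm_coe]

theorem expChar_apply_add (l x y : ℝ) : expChar l (x + y) = expChar l x * expChar l y := by
  simp only [expChar_apply, mul_add, Circle.exp_add, Circle.coe_mul]

/-- The Bohr set of `ℝ` with set of frequencies `Λ` and radius `δ`. -/
def bohrSet (Λ : Finset ℝ) (δ : ℝ) : Set ℝ := {y | ∀ l ∈ Λ, ‖expChar l y - 1‖ < δ}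

theorem cos_two_pi_mul_le_cos_mul {a v : ℝ} (ha : |a| ≤ Real.pi) (hv : |v| ≤ 1 / 2) :
    Real.cos (2 * Real.pi * v) ≤ Real.cos (a * v) := by
  have hle : |a * v| ≤ |2 * Real.pi * v| := by
    rw [abs_mul, abs_mul, abs_of_pos Real.two_pi_pos]
    gcongr
    linarith [Real.pi_pos]
  have hv' : |2 * Real.pi * v| ≤ Real.pi := by
    rw [abs_mul, abs_of_pos Real.two_pi_pos]
    nlinarith [Real.pi_pos]
  rw [← Real.cos_abs, ← Real.cos_abs (a * v)]
  exact Real.cos_le_cos_of_nonneg_of_le_pi (abs_nonneg _) hv' hle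

theorem re_zpow_round_pos {z : Circle} {u : ℝ}
    (hu : ‖(Circle.exp (2 * Real.pi * u) : ℂ) - 1‖ < 1 / 2)
    (hzu : ‖(Circle.exp (arg z * u) : ℂ) - 1‖ < 1 / 2) :
    0 < ((z ^ round u : Circle) : ℂ).re := by
  set v := u - round u with hv
  have hcos (w : ℝ) : ((Circle.exp w : Circle) : ℂ).re = Real.cos w := by
    rw [Circle.coe_exp, exp_ofReal_mul_I_re]
  have hcos_two_pi : 1 / 2 < Real.cos (2 * Real.pi * v) := by
    have hexp : Circle.exp (2 * Real.pi * v) = Circle.exp (2 * Real.pi * u) := by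
      rw [hv, mul_sub, Circle.exp_sub, Circle.exp_two_pi_mul_int, div_one]
    have := (abs_le.1 (abs_re_le_norm ((Circle.exp (2 * Real.pi * u) : ℂ) - 1))).1
    rw [← hexp, sub_re, one_re, hcos] at this
    rw [← hexp] at hu
    linarith
  have hcos_arg : Real.cos (2 * Real.pi * v) ≤ Real.cos (arg z * v) :=
    cos_two_pi_mul_le_cos_mul (abs_arg_le_pi z) (abs_sub_round u)
  have hfactor : Circle.exp (arg z * u) = z ^ round u * Circle.exp (arg z * v) := by
    rw [← Circle.exp_arg z, ← Circle.exp_intCast_mul, ← Circle.exp_add, Circle.exp_arg]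
    congr 1
    rw [hv]; ring
  have hdist : ‖((z ^ round u : Circle) : ℂ) - Circle.exp (-(arg z * v))‖ < 1 / 2 := by
    calc _ = ‖(((z ^ round u : Circle) : ℂ) - Circle.exp (-(arg z * v))) *
          Circle.exp (arg z * v)‖ := by rw [norm_mul, Circle.norm_coe, mul_one]
      _ = ‖((z ^ round u * Circle.exp (arg z * v) : Circle) : ℂ) - 1‖ := by
        rw [sub_mul, ← Circle.coe_mul, ← Circle.coe_mul, Circle.exp_neg, inv_mul_cancel,
          Circle.coe_one]
      _ < 1 / 2 := hfactor ▸ hzu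
  have := (abs_le.1 (abs_re_le_norm (((z ^ round u : Circle) : ℂ) - Circle.exp (-(arg z * v))))).1
  rw [sub_re, hcos, Real.cos_neg] at this
  linarith

section InvariantMap

variable {G E : Type*} [AddCommGroup G] [PseudoMetricSpace E] {Φ : G → E}

theorem dist_apply_add_sub_sub_le (hΦ : ∀ x y z, dist (Φ (x + z)) (Φ (y + z)) = dist (Φ x) (Φ y))
    (p q r s : G) : dist (Φ (p + q - r - s)) (Φ 0) ≤ dist (Φ p) (Φ r) + dist (Φ q) (Φ s) := by
  calc dist (Φ (p + q - r - s)) (Φ 0) = dist (Φ (p + q)) (Φ (r + s)) := by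
        rw [← hΦ _ _ (r + s)]
        congr 2 <;> abel
    _ ≤ dist (Φ (p + q)) (Φ (r + q)) + dist (Φ (q + r)) (Φ (s + r)) := by
        rw [add_comm q r, add_comm s r]
        exact dist_triangle _ _ _
    _ = dist (Φ p) (Φ r) + dist (Φ q) (Φ s) := by rw [hΦ, hΦ]

theorem exists_circle_finset_dist_lt {Φ : ℤ → E}
    (hΦ : ∀ x y z, dist (Φ (x + z)) (Φ (y + z)) = dist (Φ x) (Φ y))
    (htb : TotallyBounded (range Φ)) {ε : ℝ} (hε : 0 < ε) :
    ∃ Z : Finset Circle, ∀ n : ℤ, (∀ z ∈ Z, 0 < ((z ^ n : Circle) : ℂ).re) →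
      dist (Φ n) (Φ 0) < ε := by
  obtain ⟨t, ht, hcover⟩ := Metric.totallyBounded_iff.1 htb (ε / 4) (by positivity)
  have : Finite t := ht
  have hnet (n : ℤ) : ∃ e : t, dist (Φ n) e < ε / 4 := by
    simpa using hcover (mem_range_self n)
  choose c hc using hnet
  have hcolor {m n : ℤ} (h : c m = c n) : dist (Φ m) (Φ n) < ε / 2 := by
    have := dist_triangle_right (Φ m) (Φ n) (c m)
    linarith [hc m, h ▸ hc n]
  obtain ⟨Z, hZ⟩ := exists_circle_finset_of_coloring c
  refine ⟨Z, fun n hn ↦ ?_⟩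
  obtain ⟨p, q, r, s, hpr, hqs, rfl⟩ := hZ n hn
  linarith [dist_apply_add_sub_sub_le hΦ p q r s, hcolor hpr, hcolor hqs]

-- Restrict `Φ` to a lattice `h ℤ`, with `h` so small that continuity controls the remainder of `y`
-- modulo `h`.
theorem exists_bohrSet_dist_lt {Φ : ℝ → E}
    (hΦ : ∀ x y z, dist (Φ (x + z)) (Φ (y + z)) = dist (Φ x) (Φ y))
    (hcont : ContinuousAt Φ 0) (htb : TotallyBounded (range Φ)) {ε : ℝ} (hε : 0 < ε) :
    ∃ Λ : Finset ℝ, ∀ y ∈ bohrSet Λ (1 / 2), dist (Φ y) (Φ 0) < ε := by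
  classical
  obtain ⟨h, hh, hsmall⟩ := Metric.continuousAt_iff.1 hcont (ε / 2) (by positivity)
  obtain ⟨Z, hZ⟩ := exists_circle_finset_dist_lt (Φ := fun n : ℤ ↦ Φ (n * h))
    (fun x y z ↦ by simp only [Int.cast_add, add_mul, hΦ])
    (htb.subset (range_comp_subset_range (fun n : ℤ ↦ n * h) Φ)) (half_pos hε)
  refine ⟨insert (2 * Real.pi / h) (Z.image fun z : Circle ↦ arg z / h), fun y hy ↦ ?_⟩
  have hbohr : ∀ l ∈ insert (2 * Real.pi) (Z.image fun z : Circle ↦ arg z),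
      ‖(Circle.exp (l * (y / h)) : ℂ) - 1‖ < 1 / 2 := fun l hl ↦ by
    have := hy (l / h) (by
      have := Finset.mem_image_of_mem (· / h) hl
      simpa [Finset.image_insert, Finset.image_image] using this)
    rwa [expChar_apply, div_mul_comm, mul_comm] at this
  set n := round (y / h)
  have hmultiple : dist (Φ (n * h)) (Φ 0) < ε / 2 := by
    simpa using hZ n fun z hz ↦ re_zpow_round_pos (hbohr _ (Finset.mem_insert_self _ _))
      (hbohr _ (Finset.mem_insert_of_mem (Finset.mem_image_of_mem _ hz)))
  have hremainder : dist (Φ (y - n * h)) (Φ 0) < ε / 2 := by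
    refine hsmall ?_
    have : y - n * h = (y / h - n) * h := by field_simp
    rw [dist_zero_right, this, norm_mul, Real.norm_of_nonneg hh.le]
    have := abs_sub_round (y / h)
    rw [Real.norm_eq_abs]
    nlinarith
  have := dist_apply_add_sub_sub_le hΦ (n * h) (y - n * h) 0 0
  rw [add_sub_cancel, sub_zero, sub_zero] at this
  linarith

end InvariantMap

end BohrSets

section AlmostPeriodic

variable {B : Type*} [NormedAddCommGroup B]

theorem translateR_apply (f : ℝ →ᵇ B) (x y : ℝ) : translateR f x y = f (y + x) := rfl

theorem translateR_translateR (f : ℝ →ᵇ B) (x y : ℝ) :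
    translateR (translateR f x) y = translateR f (x + y) := by
  ext w
  simp only [translateR_apply, add_assoc, add_comm y x]

theorem dist_translateR_translateR_le (f g : ℝ →ᵇ B) (x : ℝ) :
    dist (translateR f x) (translateR g x) ≤ dist f g :=
  (BoundedContinuousFunction.dist_le dist_nonneg).2 fun y ↦
    BoundedContinuousFunction.dist_coe_le_dist (f := f) (g := g) (y + x)

theorem dist_translateR_add (f : ℝ →ᵇ B) (x y z : ℝ) :
    dist (translateR f (x + z)) (translateR f (y + z)) =
      dist (translateR f x) (translateR f y) := by
  rw [← translateR_translateR, ← translateR_translateR]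
  refine (dist_translateR_translateR_le _ _ _).antisymm ?_
  simpa [translateR_translateR] using
    dist_translateR_translateR_le (translateR (translateR f x) z) (translateR (translateR f y) z)
      (-z)

theorem IsAP.totallyBounded_range {f : ℝ →ᵇ B} (hf : IsAP f) :
    TotallyBounded (range (translateR f)) :=
  hf.totallyBounded.subset subset_closure

theorem isAP_of_totallyBounded_range [CompleteSpace B] {f : ℝ →ᵇ B}
    (hf : TotallyBounded (range (translateR f))) : IsAP f :=
  hf.closure.isCompact_of_isClosed isClosed_closure

theorem IsAP.add {f g : ℝ →ᵇ B} (hf : IsAP f) (hg : IsAP g) : IsAP (f + g) := by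
  refine ((hf.prod hg).image continuous_add).closure_of_subset ?_
  rintro _ ⟨x, rfl⟩
  exact ⟨(translateR f x, translateR g x),
    ⟨subset_closure (mem_range_self x), subset_closure (mem_range_self x)⟩, rfl⟩

theorem IsAP.const_smul [NormedSpace ℂ B] {f : ℝ →ᵇ B} (hf : IsAP f) (c : ℂ) : IsAP (c • f) := by
  refine (hf.image (continuous_const_smul c)).closure_of_subset ?_
  rintro _ ⟨x, rfl⟩
  exact ⟨translateR f x, subset_closure (mem_range_self x), rfl⟩

theorem isClosed_setOf_isAP [CompleteSpace B] : IsClosed {f : ℝ →ᵇ B | IsAP f} := by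
  refine isClosed_of_closure_subset fun f hf ↦ isAP_of_totallyBounded_range ?_
  refine Metric.totallyBounded_iff.2 fun ε hε ↦ ?_
  obtain ⟨g, hg, hfg⟩ := Metric.mem_closure_iff.1 hf (ε / 2) (half_pos hε)
  obtain ⟨t, ht, hcover⟩ :=
    Metric.totallyBounded_iff.1 (IsAP.totallyBounded_range hg) (ε / 2) (half_pos hε)
  refine ⟨t, ht, ?_⟩
  rintro _ ⟨x, rfl⟩
  obtain ⟨e, he, hxe⟩ := mem_iUnion₂.1 (hcover (mem_range_self x))
  refine mem_iUnion₂.2 ⟨e, he, ?_⟩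
  calc dist (translateR f x) e
      ≤ dist (translateR f x) (translateR g x) + dist (translateR g x) e := dist_triangle _ _ _
    _ < ε / 2 + ε / 2 := add_lt_add ((dist_translateR_translateR_le f g x).trans_lt hfg) hxe
    _ = ε := add_halves ε

-- Pointwise `translateR f y` tends to `f`; compactness of the translates upgrades this to the
-- sup norm.
theorem IsAP.continuousAt_translateR {f : ℝ →ᵇ B} (hf : IsAP f) :
    ContinuousAt (translateR f) 0 := by
  refine hf.tendsto_nhds_of_unique_mapClusterPt
    (.of_forall fun y ↦ subset_closure (mem_range_self y)) fun g _ hg ↦ ?_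
  ext x
  have hlim : Tendsto (fun y ↦ translateR f y x) (𝓝 0) (𝓝 (translateR f 0 x)) :=
    (by fun_prop : Continuous fun y ↦ f (x + y)).tendsto 0
  have hcluster : MapClusterPt (g x) (𝓝 0) fun y ↦ translateR f y x :=
    MapClusterPt.continuousAt_comp (f := fun h : ℝ →ᵇ B ↦ h x)
      (by fun_prop : Continuous fun h : ℝ →ᵇ B ↦ h x).continuousAt hg
  exact eq_of_nhds_neBot (ClusterPt.mono hcluster hlim)

theorem translateR_expChar (l x : ℝ) : translateR (expChar l) x = expChar l x • expChar l := by
  ext y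
  simp [translateR_apply, expChar_apply_add, mul_comm]

theorem isAP_expChar (l : ℝ) : IsAP (expChar l) := by
  refine ((isCompact_closedBall (0 : ℂ) 1).image
    (continuous_id.smul (continuous_const (y := expChar l)))).closure_of_subset ?_
  rintro _ ⟨x, rfl⟩
  exact ⟨expChar l x, by simp [norm_expChar_apply], (translateR_expChar l x).symm⟩

theorem IsAP.exists_finset_norm_sub_lt {f : ℝ →ᵇ B} (hf : IsAP f) {ε : ℝ} (hε : 0 < ε) :
    ∃ F : Finset ℝ, ∀ y, ∃ t ∈ F, ‖f (y - t) - f 0‖ < ε := by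
  classical
  obtain ⟨t, ht, htf, hcover⟩ :=
    Metric.finite_approx_of_totallyBounded hf.totallyBounded_range ε hε
  lift t to Finset (ℝ →ᵇ B) using htf
  rw [← image_univ] at ht
  obtain ⟨F, -, rfl⟩ := Finset.subset_set_image_iff.1 ht
  refine ⟨F, fun y ↦ ?_⟩
  obtain ⟨_, he, hye⟩ := mem_iUnion₂.1 (hcover (mem_range_self y))
  obtain ⟨t, ht, rfl⟩ := Finset.mem_image.1 he
  refine ⟨t, ht, ?_⟩
  simpa [translateR_apply, dist_eq_norm, sub_eq_neg_add] using
    (BoundedContinuousFunction.dist_coe_le_dist (-t)).trans_lt hye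

end AlmostPeriodic

section InvariantMean

theorem intervalIntegrable_coe {E : Type*} [NormedAddCommGroup E] (g : ℝ →ᵇ E) (a b : ℝ) :
    IntervalIntegrable g MeasureTheory.volume a b :=
  g.continuous.intervalIntegrable a b

/-- The average of a function over the interval `[-T, T]`, as a linear functional. -/
def avg (T : ℝ) : (ℝ →ᵇ ℂ) →ₗ[ℂ] ℂ where
  toFun g := (2 * T)⁻¹ • ∫ x in (-T)..T, g x
  map_add' f g := by
    rw [← smul_add, ← intervalIntegral.integral_add (intervalIntegrable_coe f _ _)
      (intervalIntegrable_coe g _ _)]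
    rfl
  map_smul' c f := by
    rw [RingHom.id_apply, smul_comm c]
    exact congrArg _ (intervalIntegral.integral_smul c f)

theorem avg_apply (T : ℝ) (g : ℝ →ᵇ ℂ) : avg T g = (2 * T)⁻¹ • ∫ x in (-T)..T, g x := rfl

theorem avg_one {T : ℝ} (hT : 0 < T) : avg T 1 = 1 := by
  simp only [avg_apply, BoundedContinuousFunction.coe_one, Pi.one_apply]
  rw [intervalIntegral.integral_const, smul_smul, sub_neg_eq_add, ← two_mul,
    inv_mul_cancel₀ (by positivity), one_smul]

theorem norm_integral_coe_le {E : Type*} [NormedAddCommGroup E] [NormedSpace ℝ E] (g : ℝ →ᵇ E)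
    (a b : ℝ) : ‖∫ x in a..b, g x‖ ≤ ‖g‖ * |b - a| :=
  intervalIntegral.norm_integral_le_of_norm_le_const fun x _ ↦ g.norm_coe_le_norm x

theorem norm_avg_le (T : ℝ) (g : ℝ →ᵇ ℂ) : ‖avg T g‖ ≤ ‖g‖ := by
  calc ‖avg T g‖ ≤ |(2 * T)⁻¹| * (‖g‖ * |T - -T|) := by
        rw [avg_apply, norm_smul, Real.norm_eq_abs]
        gcongr
        exact norm_integral_coe_le g _ _
    _ = ‖g‖ * (|2 * T|⁻¹ * |2 * T|) := by rw [abs_inv, sub_neg_eq_add, ← two_mul]; ring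
    _ ≤ ‖g‖ := mul_le_of_le_one_right (norm_nonneg g) (inv_mul_le_one)

theorem norm_avg_le_re_avg {T : ℝ} (hT : 0 < T) {g h : ℝ →ᵇ ℂ}
    (hgh : ∀ x, ‖g x‖ ≤ (h x).re) : ‖avg T g‖ ≤ (avg T h).re := by
  have hre : (avg T h).re = (2 * T)⁻¹ * ∫ x in (-T)..T, (h x).re := by
    rw [avg_apply, smul_re, smul_eq_mul]
    exact congrArg _ (reCLM.intervalIntegral_comp_comm (intervalIntegrable_coe h _ _)).symm
  have hcont : Continuous fun x ↦ (h x).re := continuous_re.comp h.continuous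
  rw [hre, avg_apply, norm_smul, Real.norm_of_nonneg (by positivity)]
  gcongr
  exact intervalIntegral.norm_integral_le_of_norm_le (by linarith)
    (.of_forall fun x _ ↦ hgh x) (hcont.intervalIntegrable _ _)

theorem norm_avg_translateR_sub_avg_le {T : ℝ} (hT : 0 < T) (g : ℝ →ᵇ ℂ) (x : ℝ) :
    ‖avg T (translateR g x) - avg T g‖ ≤ ‖g‖ * |x| * T⁻¹ := by
  have hint := intervalIntegrable_coe g
  have hdiff : (∫ y in (-T)..T, translateR g x y) - ∫ y in (-T)..T, g y =
      (∫ y in (T)..(T + x), g y) - ∫ y in (-T)..(-T + x), g y := by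
    rw [← intervalIntegral.integral_interval_sub_interval_comm' (hint _ _) (hint _ _) (hint _ _)]
    congr 1
    exact intervalIntegral.integral_comp_add_right (fun y ↦ g y) x
  calc ‖avg T (translateR g x) - avg T g‖
      = (2 * T)⁻¹ * ‖(∫ y in (T)..(T + x), g y) - ∫ y in (-T)..(-T + x), g y‖ := by
        rw [avg_apply, avg_apply, ← smul_sub, hdiff, norm_smul,
          Real.norm_of_nonneg (by positivity)]
    _ ≤ (2 * T)⁻¹ * (‖g‖ * |T + x - T| + ‖g‖ * |-T + x - -T|) := by
        gcongr
        exact (norm_sub_le _ _).trans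
          (add_le_add (norm_integral_coe_le g _ _) (norm_integral_coe_le g _ _))
    _ = ‖g‖ * |x| * T⁻¹ := by
        rw [add_sub_cancel_left, add_sub_cancel_left]
        ring

theorem tendsto_avg_translateR_sub_avg (g : ℝ →ᵇ ℂ) (x : ℝ) :
    Tendsto (fun T ↦ avg T (translateR g x) - avg T g) atTop (𝓝 0) := by
  refine squeeze_zero_norm' ((eventually_gt_atTop 0).mono fun T hT ↦
    norm_avg_translateR_sub_avg_le hT g x) ?_
  simpa using tendsto_inv_atTop_zero.const_mul (‖g‖ * |x|)

theorem exists_tendsto_avg_ultrafilter (g : ℝ →ᵇ ℂ) :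
    ∃ z, Tendsto (fun T ↦ avg T g) (Ultrafilter.of (atTop : Filter ℝ)) (𝓝 z) := by
  obtain ⟨z, -, hz⟩ := (isCompact_closedBall (0 : ℂ) ‖g‖).ultrafilter_le_nhds
    ((Ultrafilter.of (atTop : Filter ℝ)).map fun T ↦ avg T g)
    (le_principal_iff.2 <| Ultrafilter.mem_map.2 <| univ_mem' fun T ↦ by
      simpa using norm_avg_le T g)
  exact ⟨z, hz⟩

/-- A translation invariant mean on all bounded continuous functions: the limit of the averages
over `[-T, T]` as `T → ∞` along a fixed ultrafilter. It makes means available before the averages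
of almost periodic functions are known to converge. -/
def invMean : (ℝ →ᵇ ℂ) →L[ℂ] ℂ :=
  LinearMap.mkContinuous
    (linearMapOfTendsto (fun g ↦ (exists_tendsto_avg_ultrafilter g).choose) avg
      (tendsto_pi_nhds.2 fun g ↦ (exists_tendsto_avg_ultrafilter g).choose_spec)) 1 fun g ↦ by
    rw [one_mul]
    exact le_of_tendsto (exists_tendsto_avg_ultrafilter g).choose_spec.norm
      (.of_forall fun T ↦ norm_avg_le T g)

theorem tendsto_avg_invMean (g : ℝ →ᵇ ℂ) :
    Tendsto (fun T ↦ avg T g) (Ultrafilter.of (atTop : Filter ℝ)) (𝓝 (invMean g)) :=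
  (exists_tendsto_avg_ultrafilter g).choose_spec

theorem norm_invMean_le_re_invMean {g h : ℝ →ᵇ ℂ} (hgh : ∀ x, ‖g x‖ ≤ (h x).re) :
    ‖invMean g‖ ≤ (invMean h).re :=
  le_of_tendsto_of_tendsto (tendsto_avg_invMean g).norm
    ((continuous_re.tendsto _).comp (tendsto_avg_invMean h))
    (Ultrafilter.of_le atTop ((eventually_gt_atTop 0).mono fun _ hT ↦ norm_avg_le_re_avg hT hgh))

theorem invMean_eq_of_tendsto {g : ℝ →ᵇ ℂ} {z : ℂ}
    (h : Tendsto (fun T ↦ avg T g) atTop (𝓝 z)) : invMean g = z :=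
  tendsto_nhds_unique (tendsto_avg_invMean g) (h.mono_left (Ultrafilter.of_le _))

theorem invMean_one : invMean 1 = 1 :=
  invMean_eq_of_tendsto <| tendsto_const_nhds.congr' <|
    (eventually_gt_atTop 0).mono fun _ hT ↦ (avg_one hT).symm

theorem invMean_translateR (g : ℝ →ᵇ ℂ) (x : ℝ) : invMean (translateR g x) = invMean g :=
  sub_eq_zero.1 <| tendsto_nhds_unique ((tendsto_avg_invMean _).sub (tendsto_avg_invMean _))
    ((tendsto_avg_translateR_sub_avg g x).mono_left (Ultrafilter.of_le _))

open scoped ComplexOrder in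
theorem invMean_nonneg {h : ℝ →ᵇ ℂ} (hh : ∀ x, 0 ≤ h x) : 0 ≤ invMean h := by
  refine re_eq_norm.1 ((re_le_norm _).antisymm (norm_invMean_le_re_invMean fun x ↦ ?_))
  exact (re_eq_norm.2 (hh x)).ge

/-- The space of trigonometric polynomials. -/
def trigPoly : Submodule ℂ (ℝ →ᵇ ℂ) := Submodule.span ℂ (range expChar)

theorem expChar_mem_trigPoly (l : ℝ) : expChar l ∈ trigPoly :=
  Submodule.subset_span (mem_range_self l)

theorem tendsto_avg_expChar {l : ℝ} (hl : l ≠ 0) :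
    Tendsto (fun T ↦ avg T (expChar l)) atTop (𝓝 0) := by
  -- Translation by `π / l` changes the sign of `expChar l`.
  have hneg : expChar l (Real.pi / l) = -1 := by
    simp [expChar_apply, mul_div_cancel₀ _ hl, Circle.coe_exp]
  have h := (tendsto_avg_translateR_sub_avg (expChar l) (Real.pi / l)).const_mul (-1 / 2 : ℂ)
  rw [mul_zero] at h
  refine h.congr fun T ↦ ?_
  rw [translateR_expChar, hneg, map_smul, smul_eq_mul]
  ring

theorem expChar_zero : expChar 0 = 1 := BoundedContinuousFunction.innerProbChar_zero

theorem tendsto_avg_of_mem_trigPoly {p : ℝ →ᵇ ℂ} (hp : p ∈ trigPoly) :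
    Tendsto (fun T ↦ avg T p) atTop (𝓝 (invMean p)) := by
  suffices ∃ z, Tendsto (fun T ↦ avg T p) atTop (𝓝 z) by
    obtain ⟨z, hz⟩ := this
    rwa [invMean_eq_of_tendsto hz]
  induction hp using Submodule.span_induction with
  | mem p hp =>
    obtain ⟨l, rfl⟩ := hp
    obtain rfl | hl := eq_or_ne l 0
    · exact ⟨1, tendsto_const_nhds.congr' <|
        (eventually_gt_atTop 0).mono fun T hT ↦ by rw [expChar_zero]; exact (avg_one hT).symm⟩
    · exact ⟨0, tendsto_avg_expChar hl⟩
  | zero => exact ⟨0, by simp⟩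
  | add f g _ _ hf hg =>
    obtain ⟨⟨a, ha⟩, b, hb⟩ := hf, hg
    exact ⟨a + b, by simpa using ha.add hb⟩
  | smul c f _ hf =>
    obtain ⟨a, ha⟩ := hf
    exact ⟨c • a, by simpa using ha.const_smul c⟩

theorem tendsto_avg_of_mem_closure_trigPoly {g : ℝ →ᵇ ℂ}
    (hg : g ∈ closure (trigPoly : Set (ℝ →ᵇ ℂ))) :
    Tendsto (fun T ↦ avg T g) atTop (𝓝 (invMean g)) := by
  have hequi : Equicontinuous fun (T : ℝ) (f : ℝ →ᵇ ℂ) ↦ avg T f :=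
    (LipschitzWith.uniformEquicontinuous (fun T f ↦ avg T f) 1 fun T ↦
      LipschitzWith.of_dist_le_mul fun f h ↦ by
        rw [dist_eq_norm, ← map_sub, dist_eq_norm]
        simpa using norm_avg_le T (f - h)).equicontinuous
  exact closure_minimal (fun _ ↦ tendsto_avg_of_mem_trigPoly)
    (hequi.isClosed_setOfPred_tendsto invMean.continuous) hg

end InvariantMean

section Multipliers

theorem expChar_add (l m : ℝ) : expChar (l + m) = expChar l * expChar m := by
  ext x
  simp [expChar_apply, add_mul, Circle.exp_add]

theorem expChar_apply_neg (l x : ℝ) : expChar l (-x) = expChar (-l) x := by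
  rw [expChar_apply, expChar_apply, mul_neg, neg_mul]

theorem mul_mem_trigPoly {p q : ℝ →ᵇ ℂ} (hp : p ∈ trigPoly) (hq : q ∈ trigPoly) :
    p * q ∈ trigPoly := by
  have h : p * q ∈ trigPoly * trigPoly := Submodule.mul_mem_mul hp hq
  rw [trigPoly, Submodule.span_mul_span] at h
  refine Submodule.span_mono ?_ h
  rintro _ ⟨_, ⟨l, rfl⟩, _, ⟨m, rfl⟩, rfl⟩
  exact ⟨l + m, expChar_add l m⟩

theorem one_mem_trigPoly : (1 : ℝ →ᵇ ℂ) ∈ trigPoly := expChar_zero ▸ expChar_mem_trigPoly 0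

theorem pow_mem_trigPoly {p : ℝ →ᵇ ℂ} (hp : p ∈ trigPoly) (n : ℕ) : p ^ n ∈ trigPoly := by
  induction n with
  | zero => exact one_mem_trigPoly
  | succ n ih => exact pow_succ p n ▸ mul_mem_trigPoly ih hp

theorem isAP_of_mem_trigPoly {p : ℝ →ᵇ ℂ} (hp : p ∈ trigPoly) : IsAP p := by
  induction hp using Submodule.span_induction with
  | mem p hp =>
    obtain ⟨l, rfl⟩ := hp
    exact isAP_expChar l
  | zero => simpa using (isAP_expChar 0).const_smul 0
  | add f g _ _ hf hg => exact hf.add hg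
  | smul c f _ hf => exact hf.const_smul c

/-- The `l`-th Fourier coefficient, with respect to `invMean`, of a bounded continuous function. -/
def fourierCoeff (l : ℝ) : (ℝ →ᵇ ℂ) →L[ℂ] ℂ :=
  invMean ∘L ContinuousLinearMap.mul ℂ (ℝ →ᵇ ℂ) (expChar (-l))

theorem fourierCoeff_apply (l : ℝ) (f : ℝ →ᵇ ℂ) :
    fourierCoeff l f = invMean (expChar (-l) * f) := rfl

theorem fourierCoeff_expChar_of_ne {l m : ℝ} (hlm : m ≠ l) : fourierCoeff m (expChar l) = 0 := by
  rw [fourierCoeff_apply, ← expChar_add]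
  exact invMean_eq_of_tendsto (tendsto_avg_expChar (by rwa [neg_add_eq_sub, sub_ne_zero, ne_comm]))

theorem fourierCoeff_mul_expChar_apply (f : ℝ →ᵇ ℂ) (l x : ℝ) :
    fourierCoeff l f * expChar l x = invMean (translateR f x * expChar (-l)) := by
  have htranslate : translateR (translateR f x * expChar (-l)) (-x) =
      expChar l x • (expChar (-l) * f) := by
    ext y
    simp only [translateR_apply, BoundedContinuousFunction.coe_mul, Pi.mul_apply,
      BoundedContinuousFunction.coe_smul, neg_add_cancel_right, expChar_apply_add, smul_eq_mul,
      expChar_apply_neg, neg_neg]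
    ring
  rw [← invMean_translateR _ (-x), htranslate, map_smul, fourierCoeff_apply, smul_eq_mul, mul_comm]

/-- The Fourier multiplier `f ↦ ∑ l, c l • f̂(-l) • expChar (-l)`, that is, the convolution of `f`
with the reflection of the trigonometric polynomial `∑ l, c l • expChar l`. -/
def multiplier (c : ℝ →₀ ℂ) : (ℝ →ᵇ ℂ) →L[ℂ] ℝ →ᵇ ℂ :=
  c.sum fun l a ↦ a • (fourierCoeff (-l)).smulRight (expChar (-l))

theorem multiplier_apply (c : ℝ →₀ ℂ) (f : ℝ →ᵇ ℂ) :
    multiplier c f = c.sum fun l a ↦ a • fourierCoeff (-l) f • expChar (-l) := by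
  simp [multiplier, Finsupp.sum]

theorem multiplier_apply_apply (c : ℝ →₀ ℂ) (f : ℝ →ᵇ ℂ) (x : ℝ) :
    multiplier c f x = invMean (translateR f x * c.sum fun l a ↦ a • expChar l) := by
  simp [multiplier_apply, Finsupp.sum, Finset.mul_sum, mul_smul_comm,
    fourierCoeff_mul_expChar_apply]

theorem multiplier_apply_mem_span (c : ℝ →₀ ℂ) {f : ℝ →ᵇ ℂ} {Γ : Set ℝ}
    (hf : ∀ l ∉ Γ, fourierCoeff l f = 0) : multiplier c f ∈ Submodule.span ℂ (expChar '' Γ) := by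
  rw [multiplier_apply]
  refine Submodule.sum_mem _ fun l _ ↦ Submodule.smul_mem _ _ ?_
  by_cases hl : -l ∈ Γ
  · exact Submodule.smul_mem _ _ (Submodule.subset_span (mem_image_of_mem _ hl))
  · rw [hf _ hl, zero_smul]
    exact Submodule.zero_mem _

theorem finiteDimensional_range_multiplier (c : ℝ →₀ ℂ) :
    FiniteDimensional ℂ (LinearMap.range (multiplier c : (ℝ →ᵇ ℂ) →ₗ[ℂ] ℝ →ᵇ ℂ)) := by
  have hle : LinearMap.range (multiplier c : (ℝ →ᵇ ℂ) →ₗ[ℂ] ℝ →ᵇ ℂ) ≤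
      Submodule.span ℂ ((fun l ↦ expChar (-l)) '' c.support) := by
    rintro _ ⟨f, rfl⟩
    rw [ContinuousLinearMap.coe_coe, multiplier_apply]
    exact Submodule.sum_mem _ fun l hl ↦ Submodule.smul_mem _ _ <| Submodule.smul_mem _ _ <|
      Submodule.subset_span (mem_image_of_mem _ hl)
  have := FiniteDimensional.span_of_finite ℂ (c.support.finite_toSet.image fun l ↦ expChar (-l))
  exact Submodule.finiteDimensional_of_le hle

end Multipliers

section FejerKernels

open scoped ComplexOrder

/-- Generalized Fejér kernels: the nonnegative trigonometric polynomials of mean `1`. -/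
structure IsFejerKernel (K : ℝ →ᵇ ℂ) : Prop where
  mem_trigPoly : K ∈ trigPoly
  nonneg : ∀ x, 0 ≤ K x
  invMean_eq_one : invMean K = 1

-- Finitely many translates of the set where `‖p‖ > q` cover the line.
theorem IsAP.exists_pow_le_mul_norm_invMean_pow {p : ℝ →ᵇ ℂ} (hp : IsAP p)
    (hpos : ∀ x, 0 ≤ p x) {q : ℝ} (hq₀ : 0 ≤ q) (hq : q < ‖p 0‖) :
    ∃ C : ℝ, ∀ N : ℕ, q ^ N ≤ C * ‖invMean (p ^ N)‖ := by
  obtain ⟨F, hF⟩ := hp.exists_finset_norm_sub_lt (sub_pos.2 hq)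
  refine ⟨F.card, fun N ↦ ?_⟩
  have hre (x : ℝ) : ((p ^ N) x).re = ‖p x‖ ^ N := by
    rw [BoundedContinuousFunction.coe_pow, Pi.pow_apply, re_eq_norm.2 (pow_nonneg (hpos x) N),
      norm_pow]
  have hle (y : ℝ) : ‖((q ^ N : ℂ) • (1 : ℝ →ᵇ ℂ)) y‖ ≤
      ((∑ t ∈ F, translateR (p ^ N) (-t)) y).re := by
    obtain ⟨t, ht, hyt⟩ := hF y
    have hqt : q ≤ ‖p (y - t)‖ := by
      have := norm_sub_norm_le (p 0) (p (y - t))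
      rw [norm_sub_rev] at this
      linarith
    calc ‖((q ^ N : ℂ) • (1 : ℝ →ᵇ ℂ)) y‖ = q ^ N := by simp [abs_of_nonneg hq₀]
      _ ≤ ‖p (y - t)‖ ^ N := pow_le_pow_left₀ hq₀ hqt N
      _ ≤ ∑ t ∈ F, ‖p (y - t)‖ ^ N :=
        Finset.single_le_sum (f := fun t ↦ ‖p (y - t)‖ ^ N) (fun _ _ ↦ by positivity) ht
      _ = ((∑ t ∈ F, translateR (p ^ N) (-t)) y).re := by
        simp only [BoundedContinuousFunction.coe_sum, Finset.sum_apply, re_sum, translateR_apply,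
          hre, sub_eq_add_neg]
  calc q ^ N = ‖invMean ((q ^ N : ℂ) • (1 : ℝ →ᵇ ℂ))‖ := by
        simp [invMean_one, abs_of_nonneg hq₀]
    _ ≤ (invMean (∑ t ∈ F, translateR (p ^ N) (-t))).re := norm_invMean_le_re_invMean hle
    _ = F.card * (invMean (p ^ N)).re := by simp [invMean_translateR]
    _ ≤ F.card * ‖invMean (p ^ N)‖ := by
      gcongr
      exact re_le_norm _

-- The kernels are the normalized powers `p ^ N`, which concentrate on the set where `p` is close
-- to `p 0`.
theorem exists_isFejerKernel_norm_le {p : ℝ →ᵇ ℂ} (hp : p ∈ trigPoly) (hpos : ∀ x, 0 ≤ p x)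
    {r η : ℝ} (hr₀ : 0 ≤ r) (hr : r < ‖p 0‖) (hη : 0 < η) :
    ∃ K, IsFejerKernel K ∧ ∀ y, ‖p y‖ ≤ r → ‖K y‖ ≤ η := by
  obtain ⟨q, hrq, hq⟩ := exists_between hr
  have hq₀ : 0 < q := hr₀.trans_lt hrq
  obtain ⟨C, hC⟩ :=
    (isAP_of_mem_trigPoly hp).exists_pow_le_mul_norm_invMean_pow hpos hq₀.le hq
  obtain ⟨N, hN⟩ : ∃ N : ℕ, C * (r / q) ^ N < η := by
    have h := (tendsto_pow_atTop_nhds_zero_of_lt_one (div_nonneg hr₀ hq₀.le)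
      ((div_lt_one hq₀).2 hrq)).const_mul C
    rw [mul_zero] at h
    exact (h.eventually_lt_const hη).exists
  set m := invMean (p ^ N) with hm
  have hm₀ : m ≠ 0 := fun h ↦ by
    have := hC N
    rw [← hm, h, norm_zero, mul_zero] at this
    exact this.not_gt (pow_pos hq₀ N)
  have hpow (x : ℝ) : 0 ≤ (p ^ N) x := pow_nonneg (hpos x) N
  refine ⟨m⁻¹ • p ^ N, ⟨trigPoly.smul_mem _ (pow_mem_trigPoly hp N), fun x ↦ ?_, ?_⟩,
    fun y hy ↦ ?_⟩
  · exact mul_nonneg (inv_nonneg.2 (invMean_nonneg hpow)) (hpow x)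
  · rw [map_smul, smul_eq_mul, inv_mul_cancel₀ hm₀]
  · calc ‖(m⁻¹ • p ^ N) y‖ = ‖p y‖ ^ N / ‖m‖ := by simp [div_eq_inv_mul]
      _ ≤ r ^ N / ‖m‖ := by gcongr
      _ ≤ C * (r / q) ^ N := by
        rw [div_le_iff₀ (norm_pos_iff.2 hm₀), div_pow, mul_div_assoc', div_mul_eq_mul_div,
          le_div_iff₀ (pow_pos hq₀ N)]
        nlinarith [mul_le_mul_of_nonneg_left (hC N) (pow_nonneg hr₀ N)]
      _ ≤ η := hN.le

/-- A trigonometric polynomial that peaks at the points where all `expChar l`, `l ∈ Λ`, are close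
to `1`. -/
def peakPoly (Λ : Finset ℝ) : ℝ →ᵇ ℂ := 1 + ∑ l ∈ Λ, ((2 : ℂ) • 1 + expChar l + expChar (-l))

theorem peakPoly_mem_trigPoly (Λ : Finset ℝ) : peakPoly Λ ∈ trigPoly :=
  trigPoly.add_mem one_mem_trigPoly <| trigPoly.sum_mem fun l _ ↦
    trigPoly.add_mem (trigPoly.add_mem (trigPoly.smul_mem _ one_mem_trigPoly)
      (expChar_mem_trigPoly l)) (expChar_mem_trigPoly (-l))

theorem peakPoly_apply (Λ : Finset ℝ) (y : ℝ) :
    peakPoly Λ y = ((1 + ∑ l ∈ Λ, (4 - ‖expChar l y - 1‖ ^ 2) : ℝ) : ℂ) := by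
  have hconj (l : ℝ) : expChar (-l) y = (starRingEnd ℂ) (expChar l y) := by
    rw [expChar_apply, expChar_apply, neg_mul, Circle.exp_neg, Circle.coe_inv_eq_conj]
  have hterm (l : ℝ) :
      2 + expChar l y + expChar (-l) y = ((4 - ‖expChar l y - 1‖ ^ 2 : ℝ) : ℂ) := by
    have hnorm : expChar l y * (starRingEnd ℂ) (expChar l y) = 1 := by
      rw [mul_conj', norm_expChar_apply, ofReal_one, one_pow]
    rw [hconj, ofReal_sub, ofReal_pow, ← mul_conj', map_sub, map_one]
    push_cast
    linear_combination hnorm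
  rw [ofReal_add, ofReal_one, ofReal_sum, Finset.sum_congr rfl fun l _ ↦ (hterm l).symm]
  simp [peakPoly]

theorem norm_expChar_apply_sub_one_sq_le (l y : ℝ) : ‖expChar l y - 1‖ ^ 2 ≤ 4 := by
  have h : ‖expChar l y - 1‖ ≤ 2 := by
    simpa [norm_expChar_apply, one_add_one_eq_two] using norm_sub_le (expChar l y) 1
  nlinarith [norm_nonneg (expChar l y - 1)]

theorem peakPoly_nonneg (Λ : Finset ℝ) (y : ℝ) : 0 ≤ peakPoly Λ y := by
  rw [peakPoly_apply, zero_le_real]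
  exact add_nonneg zero_le_one <| Finset.sum_nonneg fun l _ ↦
    sub_nonneg.2 (norm_expChar_apply_sub_one_sq_le l y)

theorem norm_peakPoly_apply (Λ : Finset ℝ) (y : ℝ) :
    ‖peakPoly Λ y‖ = 1 + ∑ l ∈ Λ, (4 - ‖expChar l y - 1‖ ^ 2) := by
  rw [← re_eq_norm.2 (peakPoly_nonneg Λ y), peakPoly_apply, ofReal_re]

theorem norm_peakPoly_zero (Λ : Finset ℝ) : ‖peakPoly Λ 0‖ = 1 + Λ.card * 4 := by
  simp [norm_peakPoly_apply, expChar_apply]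

theorem norm_peakPoly_le_of_notMem_bohrSet {Λ : Finset ℝ} {δ y : ℝ} (hδ : 0 ≤ δ)
    (hy : y ∉ bohrSet Λ δ) : ‖peakPoly Λ y‖ ≤ 1 + Λ.card * 4 - δ ^ 2 := by
  obtain ⟨l, hl, hly⟩ : ∃ l ∈ Λ, δ ≤ ‖expChar l y - 1‖ := by
    simpa [bohrSet] using hy
  have hsum : ‖expChar l y - 1‖ ^ 2 ≤ ∑ l ∈ Λ, ‖expChar l y - 1‖ ^ 2 :=
    Finset.single_le_sum (f := fun l ↦ ‖expChar l y - 1‖ ^ 2) (fun _ _ ↦ by positivity) hl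
  have hsq : δ ^ 2 ≤ ‖expChar l y - 1‖ ^ 2 := pow_le_pow_left₀ hδ hly 2
  rw [norm_peakPoly_apply, Finset.sum_sub_distrib, Finset.sum_const, nsmul_eq_mul]
  linarith

theorem exists_isFejerKernel_norm_le_of_notMem_bohrSet (Λ : Finset ℝ) {δ η : ℝ} (hδ : 0 < δ)
    (hη : 0 < η) : ∃ K, IsFejerKernel K ∧ ∀ y ∉ bohrSet Λ δ, ‖K y‖ ≤ η := by
  have hlt : max 0 (1 + Λ.card * 4 - δ ^ 2) < ‖peakPoly Λ 0‖ := by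
    rw [norm_peakPoly_zero]
    exact max_lt (by positivity) (sub_lt_self _ (by positivity))
  obtain ⟨K, hK, hKη⟩ := exists_isFejerKernel_norm_le (peakPoly_mem_trigPoly Λ)
    (peakPoly_nonneg Λ) (le_max_left _ _) hlt hη
  exact ⟨K, hK, fun y hy ↦
    hKη y ((norm_peakPoly_le_of_notMem_bohrSet hδ.le hy).trans (le_max_right _ _))⟩

end FejerKernels

section Approximation

open scoped ComplexOrder

theorem bohrSet_anti {Λ Λ' : Finset ℝ} (h : Λ ⊆ Λ') (δ : ℝ) : bohrSet Λ' δ ⊆ bohrSet Λ δ :=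
  fun _ hy l hl ↦ hy l (h hl)

theorem IsFejerKernel.norm_invMean_translateR_mul_le {K : ℝ →ᵇ ℂ} (hK : IsFejerKernel K)
    (f : ℝ →ᵇ ℂ) (x : ℝ) : ‖invMean (translateR f x * K)‖ ≤ ‖f‖ := by
  calc ‖invMean (translateR f x * K)‖ ≤ (invMean ((‖f‖ : ℂ) • K)).re := by
        refine norm_invMean_le_re_invMean fun y ↦ ?_
        simp only [BoundedContinuousFunction.coe_mul, Pi.mul_apply, norm_mul,
          BoundedContinuousFunction.coe_smul, smul_eq_mul, re_ofReal_mul,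
          re_eq_norm.2 (hK.nonneg y)]
        gcongr
        exact f.norm_coe_le_norm _
    _ = ‖f‖ := by simp [hK.invMean_eq_one]

theorem IsFejerKernel.norm_invMean_translateR_mul_sub_le {K : ℝ →ᵇ ℂ} (hK : IsFejerKernel K)
    {f : ℝ →ᵇ ℂ} {U : Set ℝ} {ε η : ℝ} (hε : 0 ≤ ε) (hη : 0 ≤ η)
    (hfU : ∀ y ∈ U, dist (translateR f y) (translateR f 0) ≤ ε) (hKU : ∀ y ∉ U, ‖K y‖ ≤ η)
    (x : ℝ) : ‖invMean (translateR f x * K) - f x‖ ≤ ε + 2 * ‖f‖ * η := by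
  have hpt (y : ℝ) : ‖(translateR f x * K - f x • K) y‖ ≤
      (((ε : ℂ) • K + ((2 * ‖f‖ * η : ℝ) : ℂ) • (1 : ℝ →ᵇ ℂ)) y).re := by
    have hlhs : ‖(translateR f x * K - f x • K) y‖ = ‖f (y + x) - f x‖ * ‖K y‖ := by
      rw [← norm_mul, sub_mul]
      rfl
    have hrhs : (((ε : ℂ) • K + ((2 * ‖f‖ * η : ℝ) : ℂ) • (1 : ℝ →ᵇ ℂ)) y).re =
        ε * ‖K y‖ + 2 * ‖f‖ * η := by
      rw [← re_eq_norm.2 (hK.nonneg y)]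
      simp
    rw [hlhs, hrhs]
    by_cases hy : y ∈ U
    · have hfy : ‖f (y + x) - f x‖ ≤ ε := by
        simpa [translateR_apply, dist_eq_norm, add_comm] using
          (BoundedContinuousFunction.dist_coe_le_dist x).trans (hfU y hy)
      exact le_add_of_le_of_nonneg (by gcongr) (by positivity)
    · have hfy : ‖f (y + x) - f x‖ ≤ 2 * ‖f‖ := by
        rw [← dist_eq_norm]
        exact f.dist_le_two_norm _ _
      refine le_add_of_nonneg_of_le (by positivity) ?_
      gcongr
      exact hKU y hy
  calc ‖invMean (translateR f x * K) - f x‖ = ‖invMean (translateR f x * K - f x • K)‖ := by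
        rw [map_sub, map_smul, hK.invMean_eq_one, smul_eq_mul, mul_one]
    _ ≤ (invMean ((ε : ℂ) • K + ((2 * ‖f‖ * η : ℝ) : ℂ) • (1 : ℝ →ᵇ ℂ))).re :=
      norm_invMean_le_re_invMean hpt
    _ = ε + 2 * ‖f‖ * η := by simp [hK.invMean_eq_one, invMean_one]

theorem exists_bohrSet_dist_translateR_lt {B : Type*} [NormedAddCommGroup B]
    {S : Set (ℝ →ᵇ B)} (hS : S.Finite) (hAP : ∀ f ∈ S, IsAP f) {ε : ℝ} (hε : 0 < ε) :
    ∃ Λ : Finset ℝ, ∀ f ∈ S, ∀ y ∈ bohrSet Λ (1 / 2),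
      dist (translateR f y) (translateR f 0) < ε := by
  classical
  lift S to Finset (ℝ →ᵇ B) using hS
  choose! Λ hΛ using fun f hf ↦ exists_bohrSet_dist_lt (dist_translateR_add f)
    (hAP f hf).continuousAt_translateR (hAP f hf).totallyBounded_range hε
  exact ⟨S.biUnion Λ, fun f hf y hy ↦
    hΛ f hf y (bohrSet_anti (Finset.subset_biUnion_of_mem Λ hf) _ hy)⟩

theorem exists_isFejerKernel_norm_sub_le {S : Set (ℝ →ᵇ ℂ)} (hS : S.Finite)
    (hAP : ∀ f ∈ S, IsAP f) {ε : ℝ} (hε : 0 < ε) :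
    ∃ K, IsFejerKernel K ∧ ∀ f ∈ S, ∀ x, ‖invMean (translateR f x * K) - f x‖ ≤ ε := by
  obtain ⟨Λ, hΛ⟩ := exists_bohrSet_dist_translateR_lt hS hAP (half_pos hε)
  obtain ⟨C, hC₀, hC⟩ := hS.isBounded.exists_pos_norm_le
  have hη : 0 < ε / (4 * C) := by positivity
  obtain ⟨K, hK, hKΛ⟩ := exists_isFejerKernel_norm_le_of_notMem_bohrSet Λ one_half_pos hη
  refine ⟨K, hK, fun f hf x ↦ ?_⟩
  calc ‖invMean (translateR f x * K) - f x‖ ≤ ε / 2 + 2 * ‖f‖ * (ε / (4 * C)) :=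
        hK.norm_invMean_translateR_mul_sub_le (half_pos hε).le hη.le
          (fun y hy ↦ (hΛ f hf y hy).le) hKΛ x
    _ ≤ ε / 2 + 2 * C * (ε / (4 * C)) := by
      gcongr
      exact hC f hf
    _ = ε := by
      field_simp
      norm_num

theorem exists_multiplier_norm_sub_le {S : Set (ℝ →ᵇ ℂ)} (hS : S.Finite)
    (hAP : ∀ f ∈ S, IsAP f) {ε : ℝ} (hε : 0 < ε) :
    ∃ c, (∀ f, ‖multiplier c f‖ ≤ ‖f‖) ∧ ∀ f ∈ S, ‖multiplier c f - f‖ ≤ ε := by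
  obtain ⟨K, hK, hKS⟩ := exists_isFejerKernel_norm_sub_le hS hAP hε
  obtain ⟨c, rfl⟩ := Finsupp.mem_span_range_iff_exists_finsupp.1 hK.mem_trigPoly
  refine ⟨c, fun f ↦ ?_, fun f hf ↦ ?_⟩
  · refine (BoundedContinuousFunction.norm_le (norm_nonneg f)).2 fun x ↦ ?_
    rw [multiplier_apply_apply]
    exact hK.norm_invMean_translateR_mul_le f x
  · refine (BoundedContinuousFunction.norm_le hε.le).2 fun x ↦ ?_
    rw [BoundedContinuousFunction.sub_apply, multiplier_apply_apply]
    exact hKS f hf x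

theorem exists_multiplier_norm_sub_lt {S : Set (ℝ →ᵇ ℂ)} (hS : TotallyBounded S)
    (hAP : ∀ f ∈ S, IsAP f) {ε : ℝ} (hε : 0 < ε) :
    ∃ c, ∀ f ∈ S, ‖multiplier c f - f‖ < ε := by
  obtain ⟨N, hNS, hN, hcover⟩ :=
    Metric.finite_approx_of_totallyBounded hS (ε / 3) (by positivity)
  obtain ⟨c, hc, hcN⟩ := exists_multiplier_norm_sub_le hN (fun f hf ↦ hAP f (hNS hf))
    (show 0 < ε / 3 by positivity)
  refine ⟨c, fun f hf ↦ ?_⟩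
  obtain ⟨g, hg, hfg⟩ := mem_iUnion₂.1 (hcover hf)
  rw [mem_ball, dist_eq_norm] at hfg
  calc ‖multiplier c f - f‖ = ‖multiplier c (f - g) + (multiplier c g - g) - (f - g)‖ := by
        rw [map_sub]
        congr 1
        abel
    _ ≤ ‖multiplier c (f - g)‖ + ‖multiplier c g - g‖ + ‖f - g‖ :=
      (norm_sub_le _ _).trans (add_le_add_left (norm_add_le _ _) _)
    _ < ε := by linarith [hc (f - g), hcN g hg]

theorem IsAP.mem_closure_span_expChar {f : ℝ →ᵇ ℂ} (hf : IsAP f) {Γ : Set ℝ}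
    (hΓ : ∀ l ∉ Γ, fourierCoeff l f = 0) :
    f ∈ (Submodule.span ℂ (expChar '' Γ)).topologicalClosure := by
  refine Metric.mem_closure_iff.2 fun ε hε ↦ ?_
  obtain ⟨c, hc⟩ := exists_multiplier_norm_sub_lt (finite_singleton f).totallyBounded
    (fun g hg ↦ mem_singleton_iff.1 hg ▸ hf) hε
  refine ⟨multiplier c f, multiplier_apply_mem_span c hΓ, ?_⟩
  rw [dist_comm, dist_eq_norm]
  exact hc f rfl

end Approximation

section Spectrum

theorem IsAP.bohrCoeffR_eq_fourierCoeff {f : ℝ →ᵇ ℂ} (hf : IsAP f) (l : ℝ) :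
    bohrCoeffR f l = fourierCoeff l f := by
  have hclosure : expChar (-l) * f ∈ closure (trigPoly : Set (ℝ →ᵇ ℂ)) := by
    have hf' : f ∈ closure (trigPoly : Set (ℝ →ᵇ ℂ)) := by
      have := hf.mem_closure_span_expChar (Γ := univ) (fun l hl ↦ absurd (mem_univ l) hl)
      rwa [image_univ] at this
    exact map_mem_closure (continuous_const.mul continuous_id) hf' fun p hp ↦
      mul_mem_trigPoly (expChar_mem_trigPoly (-l)) hp
  have hexp (x : ℝ) : exp (-(I * l * x)) = expChar (-l) x := by
    rw [expChar_apply, Circle.coe_exp]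
    congr 1
    push_cast
    ring
  simp only [bohrCoeffR, meanValueR, hexp]
  exact (tendsto_avg_of_mem_closure_trigPoly hclosure).limUnder_eq

theorem mem_APset_iff {Γ : Set ℝ} {f : ℝ →ᵇ ℂ} :
    f ∈ APset Γ ↔ IsAP f ∧ ∀ l ∉ Γ, fourierCoeff l f = 0 := by
  refine and_congr_right fun hf ↦ forall_congr' fun l ↦ ?_
  rw [apSpec, mem_ofPred_eq, hf.bohrCoeffR_eq_fourierCoeff, not_imp_comm]

theorem mem_APset_of_mem_span {Γ : Set ℝ} {p : ℝ →ᵇ ℂ}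
    (hp : p ∈ Submodule.span ℂ (expChar '' Γ)) : p ∈ APset Γ := by
  refine mem_APset_iff.2
    ⟨isAP_of_mem_trigPoly (Submodule.span_mono (image_subset_range _ _) hp), fun l hl ↦ ?_⟩
  have hker : Submodule.span ℂ (expChar '' Γ) ≤
      LinearMap.ker (fourierCoeff l : (ℝ →ᵇ ℂ) →ₗ[ℂ] ℂ) := by
    rw [Submodule.span_le]
    rintro _ ⟨m, hm, rfl⟩
    exact fourierCoeff_expChar_of_ne (ne_of_mem_of_not_mem hm hl).symm
  exact hker hp

theorem isClosed_APset (Γ : Set ℝ) : IsClosed (APset Γ) := by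
  have hset : APset Γ = {f | IsAP f} ∩ ⋂ l ∈ Γᶜ, {f | fourierCoeff l f = 0} := by
    ext f
    simp only [mem_APset_iff, mem_inter_iff, mem_ofPred_eq, mem_iInter₂, mem_compl_iff]
  rw [hset]
  exact isClosed_setOf_isAP.inter <| isClosed_biInter fun l _ ↦
    isClosed_eq (fourierCoeff l).continuous continuous_const

theorem coe_topologicalClosure_span_expChar (Γ : Set ℝ) :
    ((Submodule.span ℂ (expChar '' Γ)).topologicalClosure : Set (ℝ →ᵇ ℂ)) = APset Γ :=
  (closure_minimal (fun _ ↦ mem_APset_of_mem_span) (isClosed_APset Γ)).antisymm fun _ hf ↦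
    (mem_APset_iff.1 hf).1.mem_closure_span_expChar (mem_APset_iff.1 hf).2

theorem coe_topologicalClosure_span_APset (Γ : Set ℝ) :
    ((Submodule.span ℂ (APset Γ)).topologicalClosure : Set (ℝ →ᵇ ℂ)) = APset Γ := by
  rw [← coe_topologicalClosure_span_expChar Γ, Submodule.span_eq,
    (Submodule.isClosed_topologicalClosure _).submodule_topologicalClosure_eq]

theorem multiplier_apply_mem_APset (c : ℝ →₀ ℂ) {Γ : Set ℝ} {f : ℝ →ᵇ ℂ} (hf : f ∈ APset Γ) :
    multiplier c f ∈ APset Γ :=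
  mem_APset_of_mem_span (multiplier_apply_mem_span c (mem_APset_iff.1 hf).2)

end Spectrum

theorem hasApproxProperty_of_forall_isCompact {E : Type*} [NormedAddCommGroup E]
    [NormedSpace ℂ E] {X : Submodule ℂ E}
    (hX : ∀ S : Set E, S ⊆ X → IsCompact S → ∀ ε : ℝ, 0 < ε → ∃ T : E →L[ℂ] E,
      FiniteDimensional ℂ (LinearMap.range (T : E →ₗ[ℂ] E)) ∧ MapsTo T X X ∧
        ∀ x ∈ S, ‖T x - x‖ < ε) :
    HasApproxProperty X := by
  intro S hS ε hε
  obtain ⟨T, hT, hTX, hTS⟩ := hX (Subtype.val '' S) (Subtype.coe_image_subset (X : Set E) S)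
    (hS.image continuous_subtype_val) ε hε
  refine ⟨T.restrict hTX, ?_, fun x hx ↦ hTS x (mem_image_of_mem _ hx)⟩
  have hle : (LinearMap.range (T.restrict hTX : X →ₗ[ℂ] X)).map X.subtype ≤
      LinearMap.range (T : E →ₗ[ℂ] E) := by
    rintro _ ⟨_, ⟨x, rfl⟩, rfl⟩
    exact ⟨x, rfl⟩
  have := Submodule.finiteDimensional_of_le hle
  exact (Submodule.equivMapOfInjective X.subtype X.subtype_injective _).symm.finiteDimensional

end SAP

theorem stmt0_general (Γ : Set ℝ) :
    SAP.HasApproxProperty ↥((Submodule.span ℂ (SAP.APset Γ)).topologicalClosure) := by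
  refine SAP.hasApproxProperty_of_forall_isCompact fun S hSX hS ε hε ↦ ?_
  rw [SAP.coe_topologicalClosure_span_APset] at hSX ⊢
  obtain ⟨c, hc⟩ := SAP.exists_multiplier_norm_sub_lt hS.totallyBounded
    (fun f hf ↦ (hSX hf).1) hε
  exact ⟨SAP.multiplier c, SAP.finiteDimensional_range_multiplier c,
    fun _ ↦ SAP.multiplier_apply_mem_APset c, hc⟩

theorem stmt0 (Γ : Set ℝ) (hΓ : SAP.IsUnitalSemigroup Γ) :
    SAP.HasApproxProperty ↥((Submodule.span ℂ (SAP.APset Γ)).topologicalClosure) :=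
  stmt0_general Γ
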